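/- Let f(x₁, x₂) ∈ ℂ[x₁, x₂] be a nonzero polynomial and write f(x₁, x₂) = (x₁ − x₂)^k f₀(x₁, x₂) where k ≥ 0 and f₀(x, x) ≠ 0 (k is the order of the zero of f along the diagonal x₁ = x₂). Then in the commutative ring ℂ((z))[[z₁, z₂]] one has f(φ(z, z₁), φ(z, z₂)) = (z₁ − z₂)^k · u for some invertible element u of ℂ((z))[[z₁, z₂]]. -/

import Mathlib

/-!
Write `c_n = D^n(z)/n!`, so that `φ(z, y) = Σ c_n y^n` with `c₀ = z` and `c₁ = D(z) = p`.

* Since `z₁^n - z₂^n = (z₁ - z₂) Σ_{a+b=n-1} z₁^a z₂^b`, one has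
  `φ(z, z₁) - φ(z, z₂) = (z₁ - z₂) v` with `v = Σ c_{a+b+1} z₁^a z₂^b` (`phi_sub_phi`), and the
  constant term of `v` is `p ≠ 0`.
* The constant term of `f₀(φ(z, z₁), φ(z, z₂))` is `f₀(z, z)`, which is nonzero because
  `f₀(x, x) ≠ 0` and `z` is transcendental over `ℂ` (`coeff_aeval_lx`).

A power series over the field `ℂ((z))` with nonzero constant term is invertible, so
`u = v^k f₀(φ(z, z₁), φ(z, z₂))` is the required unit.
-/

noncomputable section

open HahnSeries

/-- Formal derivative `d/dx` on `ℂ((x))`. -/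
def lder (f : LaurentSeries ℂ) : LaurentSeries ℂ where
  coeff n := ((n + 1 : ℤ) : ℂ) * f.coeff (n + 1)
  isPWO_support' := by
    have hsub : (Function.support fun n : ℤ => ((n + 1 : ℤ) : ℂ) * f.coeff (n + 1)) ⊆
        (fun n : ℤ => n - 1) '' f.support := by
      intro n hn
      refine ⟨n + 1, ?_, by ring⟩
      have : f.coeff (n + 1) ≠ 0 := by
        intro h
        apply hn
        simp [Function.mem_support, h]
      simpa [HahnSeries.mem_support] using this
    exact (f.isPWO_support.image_of_monotone (fun a b hab => by simpa using hab)).mono hsub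

/-- The operator `p(x) d/dx` on `ℂ((x))`. -/
def pd (p : LaurentSeries ℂ) (f : LaurentSeries ℂ) : LaurentSeries ℂ := p * lder f

/-- The divided power `(p(x) d/dx)^{(k)} = (1/k!) (p(x)d/dx)^k`. -/
def pdPow (p : LaurentSeries ℂ) (k : ℕ) (f : LaurentSeries ℂ) : LaurentSeries ℂ :=
  ((k.factorial : ℂ))⁻¹ • (pd p)^[k] f

/-- The residue of a formal Laurent series: the coefficient of `x⁻¹`. -/
def lres (f : LaurentSeries ℂ) : ℂ := f.coeff (-1)

/-- The variable `x` of `ℂ((x))`. -/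
def lx : LaurentSeries ℂ := HahnSeries.single (1 : ℤ) (1 : ℂ)

/-- `φ(z, z₁)` viewed in `ℂ((z))[[z₁, z₂]]`: the coefficient of the monomial
`z₁^k z₂^0` is `(1/k!) D^k(z)` with `D = p(z)d/dz`, and all monomials involving
`z₂` have zero coefficient. -/
def phiVar0 (p : LaurentSeries ℂ) : MvPowerSeries (Fin 2) (LaurentSeries ℂ) :=
  fun d => if d 1 = 0 then ((((d 0).factorial : ℂ))⁻¹ • (pd p)^[d 0] lx) else 0

/-- `φ(z, z₂)` viewed in `ℂ((z))[[z₁, z₂]]`. -/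
def phiVar1 (p : LaurentSeries ℂ) : MvPowerSeries (Fin 2) (LaurentSeries ℂ) :=
  fun d => if d 0 = 0 then ((((d 1).factorial : ℂ))⁻¹ • (pd p)^[d 1] lx) else 0

lemma lder_lx : lder lx = 1 := by
  ext n
  change ((n + 1 : ℤ) : ℂ) * lx.coeff (n + 1) = _
  by_cases h : n = 0
  · subst h
    simp [lx]
  · have h1 : n + 1 ≠ 1 := by omega
    simp [lx, HahnSeries.coeff_single_of_ne h1, HahnSeries.coeff_one, h]

/-- Evaluating a polynomial at `z` keeps its coefficients; hence `z` is transcendental over `ℂ`. -/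
lemma coeff_aeval_lx (q : Polynomial ℂ) (n : ℕ) :
    (Polynomial.aeval lx q).coeff (n : ℤ) = q.coeff n := by
  have hterm : ∀ (a : ℂ) (i : ℕ),
      (algebraMap ℂ (LaurentSeries ℂ) a * lx ^ i).coeff (n : ℤ) = if n = i then a else 0 := by
    intro a i
    rw [LaurentSeries.algebraMap_apply, HahnSeries.C_mul_eq_smul, HahnSeries.coeff_smul, lx,
      HahnSeries.single_pow]
    simp [HahnSeries.coeff_single]
  rw [Polynomial.aeval_def, Polynomial.eval₂_eq_sum_range]
  simp only [HahnSeries.coeff_sum, hterm]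
  rw [Finset.sum_ite_eq]
  split_ifs with h
  · rfl
  · exact (Polynomial.coeff_eq_zero_of_natDegree_lt (by simpa using h)).symm

/-- The divided difference `(φ(z, z₁) - φ(z, z₂)) / (z₁ - z₂)`: the coefficient of `z₁^a z₂^b` is
`D^(a+b+1)(z) / (a+b+1)!`. -/
def phiQuot (p : LaurentSeries ℂ) : MvPowerSeries (Fin 2) (LaurentSeries ℂ) :=
  fun d => pdPow p (d 0 + d 1 + 1) lx

lemma coeff_phiVar0 (p : LaurentSeries ℂ) (d : Fin 2 →₀ ℕ) :
    MvPowerSeries.coeff d (phiVar0 p) = if d 1 = 0 then pdPow p (d 0) lx else 0 := rfl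

lemma coeff_phiVar1 (p : LaurentSeries ℂ) (d : Fin 2 →₀ ℕ) :
    MvPowerSeries.coeff d (phiVar1 p) = if d 0 = 0 then pdPow p (d 1) lx else 0 := rfl

lemma coeff_phiQuot (p : LaurentSeries ℂ) (d : Fin 2 →₀ ℕ) :
    MvPowerSeries.coeff d (phiQuot p) = pdPow p (d 0 + d 1 + 1) lx := rfl

lemma phi_sub_phi (p : LaurentSeries ℂ) :
    phiVar0 p - phiVar1 p = (MvPowerSeries.X 0 - MvPowerSeries.X 1) * phiQuot p := by
  ext1 d
  rw [sub_mul, map_sub, map_sub, MvPowerSeries.X, MvPowerSeries.X,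
    MvPowerSeries.coeff_monomial_mul, MvPowerSeries.coeff_monomial_mul]
  simp only [Finsupp.single_le_iff]
  simp only [coeff_phiVar0, coeff_phiVar1, coeff_phiQuot, Finsupp.tsub_apply,
    Finsupp.single_apply, one_mul]
  rcases d 0 with _ | a <;> rcases d 1 with _ | b <;> simp [add_assoc, add_comm, add_left_comm]

lemma constantCoeff_phiQuot (p : LaurentSeries ℂ) :
    MvPowerSeries.constantCoeff (phiQuot p) = p := by
  change pdPow p 1 lx = p
  simp [pdPow, pd, lder_lx]

lemma constantCoeff_phiVar0 (p : LaurentSeries ℂ) :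
    MvPowerSeries.constantCoeff (phiVar0 p) = lx := by
  change (if (0 : ℕ) = 0 then pdPow p 0 lx else 0) = lx
  simp [pdPow]

lemma constantCoeff_phiVar1 (p : LaurentSeries ℂ) :
    MvPowerSeries.constantCoeff (phiVar1 p) = lx := by
  change (if (0 : ℕ) = 0 then pdPow p 0 lx else 0) = lx
  simp [pdPow]

/-- The constant term of `g(φ(z, z₁), φ(z, z₂))` is `g(z, z)`. -/
lemma constantCoeff_aeval_phi (p : LaurentSeries ℂ) (g : MvPolynomial (Fin 2) ℂ) :
    MvPowerSeries.constantCoeff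
      (MvPolynomial.aeval (fun i : Fin 2 => if i = 0 then phiVar0 p else phiVar1 p) g) =
    Polynomial.aeval lx
      (MvPolynomial.aeval (fun _ : Fin 2 => (Polynomial.X : Polynomial ℂ)) g) := by
  induction g using MvPolynomial.induction_on with
  | C a =>
    simp [MvPowerSeries.algebraMap_apply]
  | add g h hg hh => simp only [map_add, hg, hh]
  | mul_X g i hg =>
    rw [map_mul, map_mul, hg, map_mul, map_mul, MvPolynomial.aeval_X, MvPolynomial.aeval_X,
      Polynomial.aeval_X]
    split_ifs
    · rw [constantCoeff_phiVar0]
    · rw [constantCoeff_phiVar1]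

/-- if a nonzero polynomial `f(x₁,x₂)` is written as
`f = (x₁−x₂)^k f₀` with `f₀(x,x) ≠ 0`, then in `ℂ((z))[[z₁,z₂]]` one has
`f(φ(z,z₁), φ(z,z₂)) = (z₁ − z₂)^k · u` for some invertible `u`. -/
theorem poly_of_phi_factors (p : LaurentSeries ℂ) (hp : p ≠ 0)
    (f f₀ : MvPolynomial (Fin 2) ℂ) (k : ℕ) (hf : f ≠ 0)
    (hfact : f = (MvPolynomial.X 0 - MvPolynomial.X 1) ^ k * f₀)
    (hdiag : MvPolynomial.aeval (fun _ : Fin 2 => (Polynomial.X : Polynomial ℂ)) f₀ ≠ 0) :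
    ∃ u : MvPowerSeries (Fin 2) (LaurentSeries ℂ), IsUnit u ∧
      MvPolynomial.aeval (fun i : Fin 2 => if i = 0 then phiVar0 p else phiVar1 p) f
        = (MvPowerSeries.X 0 - MvPowerSeries.X 1) ^ k * u := by
  have hv : IsUnit (phiQuot p) := by
    rw [MvPowerSeries.isUnit_iff_constantCoeff, constantCoeff_phiQuot]
    exact hp.isUnit
  have hu : IsUnit (MvPolynomial.aeval
      (fun i : Fin 2 => if i = 0 then phiVar0 p else phiVar1 p) f₀) := by
    rw [MvPowerSeries.isUnit_iff_constantCoeff, constantCoeff_aeval_phi, isUnit_iff_ne_zero]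
    intro h0
    apply hdiag
    ext n
    rw [← coeff_aeval_lx, h0]
    simp
  refine ⟨phiQuot p ^ k * _, (hv.pow k).mul hu, ?_⟩
  rw [hfact, map_mul, map_pow, map_sub, MvPolynomial.aeval_X, MvPolynomial.aeval_X, if_pos rfl,
    if_neg one_ne_zero, phi_sub_phi, mul_pow, mul_assoc]
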